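/- arXiv:2010.09261 — 2 statements merged into one kernel-verified Lean document; each statement's English description precedes it below -/
import Mathlib

section
/- Let H be a bounded linear operator on a complex Hilbert space ℋ. Then H is diagonalizable (i.e. there exists a bounded invertible operator G with bounded inverse such that G H G⁻¹ is normal) if and only if there exists a positive, self-adjoint, bounded invertible operator W on ℋ with bounded inverse such that H commutes with the weighted adjoint H‡ := W⁻¹ H* W, that is, H ∘ (W⁻¹ ∘ H* ∘ W) = (W⁻¹ ∘ H* ∘ W) ∘ H. -/
open ContinuousLinearMap

/-- A bounded operator `H` on a complex Hilbert space is *diagonalizable* if there is a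
bounded invertible operator `G` with bounded inverse such that `G H G⁻¹` is normal. -/
def Diagonalizable {𝓗 : Type*} [NormedAddCommGroup 𝓗] [InnerProductSpace ℂ 𝓗]
    [CompleteSpace 𝓗] (H : 𝓗 →L[ℂ] 𝓗) : Prop :=
  ∃ G Ginv : 𝓗 →L[ℂ] 𝓗, G ∘L Ginv = 1 ∧ Ginv ∘L G = 1 ∧
    (G ∘L H ∘L Ginv) ∘L adjoint (G ∘L H ∘L Ginv)
      = adjoint (G ∘L H ∘L Ginv) ∘L (G ∘L H ∘L Ginv)

/-- Conjugating `h` by a unit `u` gives an element commuting with its adjoint if and only if `h`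
commutes with its adjoint weighted by `star u * u`. -/
theorem Units.commute_conj_star_conj_iff {A : Type*} [Monoid A] [StarMul A] (u : Aˣ) (h : A) :
    Commute (u * h * ↑u⁻¹) (star (u * h * ↑u⁻¹)) ↔
      Commute h (↑(star u * u)⁻¹ * star h * ↑(star u * u)) := by
  have key : star (u * h * ↑u⁻¹) = u * (↑(star u * u)⁻¹ * star h * ↑(star u * u)) * ↑u⁻¹ := by
    simp [mul_assoc, ← Units.coe_star_inv]
  rw [key]
  generalize (↑(star u * u)⁻¹ * star h * ↑(star u * u) : A) = k
  simp only [commute_iff_eq, mul_assoc, Units.inv_mul_cancel_left, Units.mul_right_inj]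
  simp only [← mul_assoc, Units.mul_left_inj]

/-- A positive invertible operator has the form `star u * u` with `u` invertible. -/
theorem ContinuousLinearMap.IsPositive.exists_units_star_mul_self
    {𝓗 : Type*} [NormedAddCommGroup 𝓗] [InnerProductSpace ℂ 𝓗] [CompleteSpace 𝓗]
    {w : (𝓗 →L[ℂ] 𝓗)ˣ} (hw : (w : 𝓗 →L[ℂ] 𝓗).IsPositive) :
    ∃ u : (𝓗 →L[ℂ] 𝓗)ˣ, star u * u = w := by
  have hw₀ : (0 : 𝓗 →L[ℂ] 𝓗) ≤ w := (nonneg_iff_isPositive _).2 hw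
  obtain ⟨u, hu⟩ := (CFC.isUnit_sqrt_iff (w : 𝓗 →L[ℂ] 𝓗) hw₀).2 w.isUnit
  refine ⟨u, Units.ext ?_⟩
  rw [Units.val_mul, Units.coe_star, hu, (CFC.sqrt_nonneg _).isSelfAdjoint.star_eq,
    CFC.sqrt_mul_sqrt_self _ hw₀]

theorem diagonalizable_iff_commutes_with_weighted_adjoint
    {𝓗 : Type*} [NormedAddCommGroup 𝓗] [InnerProductSpace ℂ 𝓗] [CompleteSpace 𝓗]
    (H : 𝓗 →L[ℂ] 𝓗) :
    Diagonalizable H ↔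
      ∃ W Winv : 𝓗 →L[ℂ] 𝓗, W.IsPositive ∧ W ∘L Winv = 1 ∧ Winv ∘L W = 1 ∧
        H ∘L (Winv ∘L adjoint H ∘L W) = (Winv ∘L adjoint H ∘L W) ∘L H := by
  constructor
  · rintro ⟨G, Ginv, hG, hG', hN⟩
    let u : (𝓗 →L[ℂ] 𝓗)ˣ := ⟨G, Ginv, hG, hG'⟩
    exact ⟨↑(star u * u), ↑(star u * u)⁻¹, (nonneg_iff_isPositive _).1 (star_mul_self_nonneg G),
      Units.mul_inv _, Units.inv_mul _, (u.commute_conj_star_conj_iff H).1 hN⟩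
  · rintro ⟨W, Winv, hpos, hW, hW', hH⟩
    let w : (𝓗 →L[ℂ] 𝓗)ˣ := ⟨W, Winv, hW, hW'⟩
    obtain ⟨u, hu⟩ := IsPositive.exists_units_star_mul_self (w := w) hpos
    refine ⟨u, ↑u⁻¹, u.mul_inv, u.inv_mul, (u.commute_conj_star_conj_iff H).2 ?_⟩
    rw [hu]
    exact hH
end

section
/- Let H be a bounded normal operator on a complex Hilbert space ℋ (H H* = H* H), let U be a unitary operator, and suppose U ∘ H ∘ U* = μ·H* with μ = 1 or μ = −1 (a pseudo-hermiticity or chiral† symmetry). Then U commutes with the modulus of H: U ∘ √(H H*) ∘ U* = √(H H*). If moreover H is invertible with bounded inverse, then the phase V_H := H ∘ (√(H H*))⁻¹ satisfies U ∘ V_H ∘ U* = μ·(V_H)*. -/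
open ContinuousLinearMap

section CStarAlgebra

variable {A : Type*} [CStarAlgebra A] [PartialOrder A] [StarOrderedRing A]

/-- Nonnegative square roots in a C⋆-algebra are unique. -/
theorem CStarAlgebra.eq_of_mul_self_eq {s t : A} (hs : 0 ≤ s) (ht : 0 ≤ t)
    (h : s * s = t * t) : s = t := by
  rw [← CFC.sqrt_mul_self s, h, CFC.sqrt_mul_self t]

/-- Whatever commutes with the square of a nonnegative element commutes with the element. -/
theorem CStarAlgebra.commute_of_commute_mul_self {s b : A} (hs : 0 ≤ s)
    (h : Commute (s * s) b) : Commute s b := by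
  rw [← CFC.sqrt_mul_self s]
  exact h.cfcₙ_nnreal _

/-- If a unitary `u` conjugates a normal element `h` to a unimodular multiple of `star h`, then
conjugation by `u` fixes the modulus of `h`. -/
theorem CStarAlgebra.conj_modulus_eq {h u s : A} {μ : ℂ} (hμ : μ * star μ = 1)
    (hnormal : h * star h = star h * h) (hu : star u * u = 1)
    (hsym : u * h * star u = μ • star h) (hs : 0 ≤ s) (hsq : s * s = h * star h) :
    u * s * star u = s := by
  have hsym' : u * star h * star u = star μ • h := by
    simpa [mul_assoc] using congrArg star hsym
  refine eq_of_mul_self_eq (star_right_conjugate_nonneg hs u) hs ?_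
  calc u * s * star u * (u * s * star u) = u * s * (star u * u) * (s * star u) := by
        simp only [mul_assoc]
    _ = u * (s * s) * star u := by simp only [hu, mul_assoc, one_mul]
    _ = u * h * (star u * u) * (star h * star u) := by
        simp only [hsq, hu, mul_assoc, one_mul]
    _ = u * h * star u * (u * star h * star u) := by simp only [mul_assoc]
    _ = s * s := by
        rw [hsym, hsym', smul_mul_smul_comm, hμ, one_smul, hsq, hnormal]

/-- If a unitary `u` conjugates a normal element `h` to a unimodular multiple of `star h`, then
it conjugates the phase of `h` to the same multiple of the adjoint of the phase. -/
theorem CStarAlgebra.conj_phase_eq {h u s r : A} {μ : ℂ} (hμ : μ * star μ = 1)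
    (hnormal : h * star h = star h * h) (hu : star u * u = 1) (hu' : u * star u = 1)
    (hsym : u * h * star u = μ • star h) (hs : 0 ≤ s) (hsq : s * s = h * star h)
    (hsr : s * r = 1) (hrs : r * s = 1) :
    u * (h * r) * star u = μ • star (h * r) := by
  have hmod := conj_modulus_eq hμ hnormal hu hsym hs hsq
  have hr_star : star r = r := by
    refine left_inv_eq_right_inv (a := s) ?_ hsr
    simpa [hs.isSelfAdjoint.star_eq] using congrArg star hsr
  have hr_conj : u * r * star u = r := by
    refine left_inv_eq_right_inv (a := s) ?_ hsr
    calc u * r * star u * s = u * r * star u * (u * s * star u) := by rw [hmod]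
      _ = u * r * (star u * u) * (s * star u) := by simp only [mul_assoc]
      _ = u * (r * s) * star u := by simp only [hu, mul_assoc, one_mul]
      _ = 1 := by rw [hrs, mul_one, hu']
  have hcomm_s : Commute s (star h) := by
    refine commute_of_commute_mul_self hs ?_
    rw [hsq]
    exact Commute.mul_left hnormal (Commute.refl _)
  have hcomm_r : r * star h = star h * r :=
    calc r * star h = r * (star h * s) * r := by simp only [mul_assoc, hsr, mul_one]
      _ = star h * r := by rw [← hcomm_s.eq, ← mul_assoc r, hrs, one_mul]
  calc u * (h * r) * star u = u * h * (star u * u) * (r * star u) := by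
        simp only [hu, mul_assoc, one_mul]
    _ = u * h * star u * (u * r * star u) := by simp only [mul_assoc]
    _ = μ • star (h * r) := by
        rw [hsym, hr_conj, smul_mul_assoc, star_mul, hr_star, hcomm_r]

end CStarAlgebra


/-- If `H` is normal and a unitary `U` satisfies `U H U* = μ H*` with `μ = ±1`
(pseudo-hermiticity or chiral† symmetry), then `U` commutes with the modulus `√(H H*)`
(the unique positive self-adjoint square root of `H H*`); and if `H` is invertible, the
phase `V_H = H ∘ √(H H*)⁻¹` satisfies `U V_H U* = μ (V_H)*`. -/
theorem dagger_symmetry_commutes_with_modulus_and_phase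
    {𝓗 : Type*} [NormedAddCommGroup 𝓗] [InnerProductSpace ℂ 𝓗] [CompleteSpace 𝓗]
    (H U S : 𝓗 →L[ℂ] 𝓗) (μ : ℂ) (hμ : μ = 1 ∨ μ = -1)
    (hnormal : H ∘L adjoint H = adjoint H ∘L H)
    (hU1 : adjoint U ∘L U = 1) (hU2 : U ∘L adjoint U = 1)
    (hsym : U ∘L H ∘L adjoint U = μ • adjoint H)
    (hS : S.IsPositive) (hSsq : S ∘L S = H ∘L adjoint H) :
    U ∘L S ∘L adjoint U = S ∧
      ∀ Hinv Sinv : 𝓗 →L[ℂ] 𝓗,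
        H ∘L Hinv = 1 → Hinv ∘L H = 1 → S ∘L Sinv = 1 → Sinv ∘L S = 1 →
        U ∘L (H ∘L Sinv) ∘L adjoint U = μ • adjoint (H ∘L Sinv) := by
  have hμ' : μ * star μ = 1 := by rcases hμ with rfl | rfl <;> simp
  have hS' : 0 ≤ S := (nonneg_iff_isPositive S).2 hS
  refine ⟨CStarAlgebra.conj_modulus_eq hμ' hnormal hU1 hsym hS' hSsq, ?_⟩
  intro _ Sinv _ _ hSr hSl
  exact CStarAlgebra.conj_phase_eq hμ' hnormal hU1 hU2 hsym hS' hSsq hSr hSl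
end
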